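/- arXiv:2006.02537 — 4 statements merged into one kernel-verified Lean document; each statement's English description precedes it below -/
import Mathlib

section
/- Let F : ℝ^N → ℝ^N, λ > 0, η > 0, μ > 0, L > 0, and x, x*, z ∈ ℝ^N. Assume: (i) z satisfies ⟨z − (x − ηF(x)), q − z⟩ ≥ η(λ‖z‖₁ − λ‖q‖₁) for all q ∈ ℝ^N; (ii) x* satisfies ⟨F(x*), q − x*⟩ + λ‖q‖₁ − λ‖x*‖₁ ≥ 0 for all q ∈ ℝ^N; (iii) ⟨F(u) − F(w), u − w⟩ ≥ μ‖u − w‖₂² for all u, w ∈ ℝ^N; (iv) ‖F(u) − F(w)‖₂ ≤ L‖u − w‖₂ for all u, w ∈ ℝ^N. Then ⟨x − z, x* − z⟩ ≤ −ημ‖x* − z‖₂² + (1/2)‖x − z‖₂² + (η²L²/2)‖x* − z‖₂². -/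
open scoped RealInnerProductSpace

/-- Refined inequality: under the proximal variational inequality for `z`, the
optimality condition for `x*`, strong monotonicity and Lipschitz continuity of
`F`, one has `⟨x − z, x* − z⟩ ≤ −ημ‖x* − z‖² + (1/2)‖x − z‖² + (η²L²/2)‖x* − z‖²`. -/
theorem stmt_10 (N : ℕ) (F : EuclideanSpace ℝ (Fin N) → EuclideanSpace ℝ (Fin N))
    (lam η μ L : ℝ) (hlam : 0 < lam) (hη : 0 < η) (hμ : 0 < μ) (hL : 0 < L)
    (x xs z : EuclideanSpace ℝ (Fin N))
    (hz : ∀ q : EuclideanSpace ℝ (Fin N),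
      ⟪z - (x - η • F x), q - z⟫ ≥ η * (lam * ∑ i, |z i| - lam * ∑ i, |q i|))
    (hxs : ∀ q : EuclideanSpace ℝ (Fin N),
      ⟪F xs, q - xs⟫ + lam * ∑ i, |q i| - lam * ∑ i, |xs i| ≥ 0)
    (hmono : ∀ u w : EuclideanSpace ℝ (Fin N), ⟪F u - F w, u - w⟫ ≥ μ * ‖u - w‖ ^ 2)
    (hlip : ∀ u w : EuclideanSpace ℝ (Fin N), ‖F u - F w‖ ≤ L * ‖u - w‖) :
    ⟪x - z, xs - z⟫ ≤
      -(η * μ) * ‖xs - z‖ ^ 2 + (1 / 2 : ℝ) * ‖x - z‖ ^ 2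
        + (η ^ 2 * L ^ 2 / 2) * ‖xs - z‖ ^ 2 := by
  have h1 := hz xs
  have h2 := hxs z
  have h3 := hmono xs z
  have h4 := hlip x z
  have h5 := real_inner_le_norm (F x - F z) (xs - z)
  have h6 : ‖F x - F z‖ * ‖xs - z‖ ≤ L * ‖x - z‖ * ‖xs - z‖ :=
    mul_le_mul_of_nonneg_right h4 (norm_nonneg _)
  have e1 : z - (x - η • F x) = η • F x - (x - z) := by abel
  have e2 : z - xs = -(xs - z) := by abel
  rw [e1, inner_sub_left, real_inner_smul_left] at h1
  rw [e2, inner_neg_right] at h2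
  rw [inner_sub_left] at h3 h5
  have h7 := mul_le_mul_of_nonneg_left h2 hη.le
  have h8 := mul_le_mul_of_nonneg_left h3 hη.le
  have h9 := mul_le_mul_of_nonneg_left (h5.trans h6) hη.le
  nlinarith [sq_nonneg (‖x - z‖ - η * L * ‖xs - z‖)]
end

section
/- Let F : ℝ^N → ℝ^N, λ > 0, μ > 0, L > 0 with: (i) ⟨F(u) − F(w), u − w⟩ ≥ μ‖u − w‖₂² for all u, w ∈ ℝ^N; (ii) ‖F(u) − F(w)‖₂ ≤ L‖u − w‖₂ for all u, w ∈ ℝ^N. Let η ∈ (0, 2μ/L²), and define z : ℝ^N → ℝ^N componentwise by z(x)_i = sign(v_i) · max(|v_i| − ηλ, 0) where v = x − ηF(x). Suppose x* ∈ ℝ^N satisfies the optimality condition ⟨F(x*), q − x*⟩ + λ‖q‖₁ − λ‖x*‖₁ ≥ 0 for all q ∈ ℝ^N. Then, with c := 1/√(1 + 2ημ − η²L²), one has c ∈ (0,1) and ‖z(x) − x*‖₂ ≤ c‖x − x*‖₂ for all x ∈ ℝ^N. -/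
open scoped RealInnerProductSpace

/-- Scalar variational inequality for soft thresholding. -/
lemma soft_aux (v t q : ℝ) (ht : 0 < t) :
    (v - Real.sign v * max (|v| - t) 0) * (q - Real.sign v * max (|v| - t) 0)
      ≤ t * |q| - t * |Real.sign v * max (|v| - t) 0| := by
  have h1 := le_abs_self q
  have h2 := neg_abs_le q
  rcases le_total (|v| - t) 0 with h | h
  · rw [max_eq_right h]
    simp only [mul_zero, sub_zero, abs_zero]
    calc v * q ≤ |v * q| := le_abs_self _
      _ = |v| * |q| := abs_mul _ _
      _ ≤ t * |q| := mul_le_mul_of_nonneg_right (by linarith) (abs_nonneg q)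
  · rw [max_eq_left h]
    rcases lt_trichotomy v 0 with hv | hv | hv
    · rw [Real.sign_of_neg hv]
      rw [abs_of_neg hv] at h ⊢
      rw [abs_of_nonpos (by linarith : (-1 : ℝ) * (-v - t) ≤ 0)]
      nlinarith
    · subst hv
      simp at h
      linarith
    · rw [Real.sign_of_pos hv]
      rw [abs_of_pos hv] at h ⊢
      rw [abs_of_nonneg (by linarith : 0 ≤ (1 : ℝ) * (v - t))]
      nlinarith

/-- Contraction property of the proximal step: if `F` is `μ`-strongly monotone
and `L`-Lipschitz, `η ∈ (0, 2μ/L²)`, and `x*` satisfies the optimality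
condition, then `z(x) = prox_{ηλ‖·‖₁}(x − ηF(x))` satisfies
`‖z(x) − x*‖ ≤ c‖x − x*‖` with `c = 1/√(1 + 2ημ − η²L²) ∈ (0,1)`. -/
theorem stmt_11 (N : ℕ) (F : EuclideanSpace ℝ (Fin N) → EuclideanSpace ℝ (Fin N))
    (lam μ L : ℝ) (hlam : 0 < lam) (hμ : 0 < μ) (hL : 0 < L)
    (hmono : ∀ u w : EuclideanSpace ℝ (Fin N), ⟪F u - F w, u - w⟫ ≥ μ * ‖u - w‖ ^ 2)
    (hlip : ∀ u w : EuclideanSpace ℝ (Fin N), ‖F u - F w‖ ≤ L * ‖u - w‖)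
    (η : ℝ) (hη : η ∈ Set.Ioo 0 (2 * μ / L ^ 2))
    (z : EuclideanSpace ℝ (Fin N) → EuclideanSpace ℝ (Fin N))
    (hz : ∀ x, ∀ i, z x i =
      Real.sign ((x - η • F x) i) * max (|(x - η • F x) i| - η * lam) 0)
    (xs : EuclideanSpace ℝ (Fin N))
    (hxs : ∀ q : EuclideanSpace ℝ (Fin N),
      ⟪F xs, q - xs⟫ + lam * ∑ i, |q i| - lam * ∑ i, |xs i| ≥ 0) :
    (1 / Real.sqrt (1 + 2 * η * μ - η ^ 2 * L ^ 2)) ∈ Set.Ioo (0 : ℝ) 1 ∧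
      ∀ x : EuclideanSpace ℝ (Fin N),
        ‖z x - xs‖ ≤ (1 / Real.sqrt (1 + 2 * η * μ - η ^ 2 * L ^ 2)) * ‖x - xs‖ := by
  obtain ⟨h0, h1⟩ := hη
  have ha : 0 < 2 * η * μ - η ^ 2 * L ^ 2 := by
    rw [lt_div_iff₀ (by positivity)] at h1
    nlinarith
  have hs1 : 1 < Real.sqrt (1 + 2 * η * μ - η ^ 2 * L ^ 2) := by
    rw [Real.lt_sqrt (by norm_num)]
    linarith
  have hs0 : 0 < Real.sqrt (1 + 2 * η * μ - η ^ 2 * L ^ 2) := by linarith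
  refine ⟨⟨by positivity, by rw [div_lt_one hs0]; exact hs1⟩, fun x => ?_⟩
  have ht : 0 < η * lam := by positivity
  have key : ⟪(x - η • F x) - z x, xs - z x⟫
      ≤ η * lam * ∑ i, |xs i| - η * lam * ∑ i, |z x i| := by
    rw [PiLp.inner_apply, Finset.mul_sum, Finset.mul_sum, ← Finset.sum_sub_distrib]
    refine Finset.sum_le_sum fun i _ => ?_
    have := soft_aux ((x - η • F x) i) (η * lam) (xs i) ht
    rw [← hz x i] at this
    have e : ⟪((x - η • F x) - z x) i, (xs - z x) i⟫
        = ((x - η • F x) i - z x i) * (xs i - z x i) := by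
      simp [mul_comm]
    rw [e]
    exact this
  have opt := mul_nonneg h0.le (hxs (z x))
  set w := (x - xs) - η • (F x - F xs) with hw
  set d := z x - xs with hd
  have k2 : ‖d‖ ^ 2 ≤ ⟪w, d⟫ := by
    have e : ⟪(x - η • F x) - z x, xs - z x⟫ = ‖d‖ ^ 2 - ⟪w, d⟫ + η * ⟪F xs, d⟫ := by
      have e1 : (x - η • F x) - z x = w - d - η • F xs := by
        rw [hw, hd, smul_sub]; abel
      have e2 : xs - z x = -d := by rw [hd]; abel
      rw [e1, e2, inner_neg_right, inner_sub_left, inner_sub_left, real_inner_smul_left,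
        real_inner_self_eq_norm_sq]
      ring
    rw [e] at key
    linarith
  have k3 : ‖w - d‖ ^ 2 = ‖w‖ ^ 2 - 2 * ⟪w, d⟫ + ‖d‖ ^ 2 := norm_sub_sq_real w d
  have k4 : ‖w‖ ^ 2 = ‖x - xs‖ ^ 2 - 2 * (η * ⟪F x - F xs, x - xs⟫)
      + η ^ 2 * ‖F x - F xs‖ ^ 2 := by
    rw [hw, norm_sub_sq_real, real_inner_smul_right, norm_smul, mul_pow,
      Real.norm_eq_abs, sq_abs, real_inner_comm]
  have k5 := mul_le_mul_of_nonneg_left (hmono x xs) h0.le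
  have k6 : ‖F x - F xs‖ ^ 2 ≤ L ^ 2 * ‖x - xs‖ ^ 2 := by
    rw [← mul_pow]
    exact pow_le_pow_left₀ (norm_nonneg _) (hlip x xs) 2
  have k7 := mul_le_mul_of_nonneg_left k6 (sq_nonneg η)
  set a := 2 * η * μ - η ^ 2 * L ^ 2 with hadef
  have k8 : ‖d‖ ^ 2 ≤ (1 - a) * ‖x - xs‖ ^ 2 := by
    rw [hadef]
    nlinarith [sq_nonneg ‖w - d‖]
  have k9 : (1 + a) * ‖d‖ ^ 2 ≤ ‖x - xs‖ ^ 2 := by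
    have := mul_le_mul_of_nonneg_left k8 (by linarith : 0 ≤ 1 + a)
    nlinarith [mul_nonneg (sq_nonneg a) (sq_nonneg ‖x - xs‖)]
  rw [one_div, ← div_eq_inv_mul, le_div_iff₀ hs0]
  apply (pow_le_pow_iff_left₀ (by positivity) (norm_nonneg _) two_ne_zero).1
  rw [mul_pow, Real.sq_sqrt (by linarith)]
  linarith
end

section
/- Let a > 0, b > 0, p ∈ (0,1), and q > 1, and let T := 1/(a(1−p)) + 1/(b(q−1)). Let V : ℝ → ℝ be a differentiable function with V(t) ≥ 0 for all t ≥ 0, and suppose that for every t ≥ 0 with V(t) > 0 one has V′(t) ≤ −a·V(t)^p − b·V(t)^q, and that V′(t) ≤ 0 whenever V(t) = 0. Then V(t) = 0 for all t ≥ T. -/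
/-- Lyapunov characterization of fixed-time stability (Polyakov): a nonnegative
differentiable function satisfying `V' ≤ −aV^p − bV^q` (with `0 < p < 1 < q`)
whenever `V > 0`, and `V' ≤ 0` whenever `V = 0`, vanishes for all
`t ≥ T = 1/(a(1−p)) + 1/(b(q−1))`. -/
theorem stmt_14 (a b p q : ℝ) (ha : 0 < a) (hb : 0 < b)
    (hp : p ∈ Set.Ioo (0 : ℝ) 1) (hq : 1 < q)
    (T : ℝ) (hT : T = 1 / (a * (1 - p)) + 1 / (b * (q - 1)))
    (V : ℝ → ℝ) (hV : Differentiable ℝ V)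
    (hVnonneg : ∀ t, 0 ≤ t → 0 ≤ V t)
    (hVdecay : ∀ t, 0 ≤ t → 0 < V t → deriv V t ≤ -a * V t ^ p - b * V t ^ q)
    (hVzero : ∀ t, 0 ≤ t → V t = 0 → deriv V t ≤ 0) :
    ∀ t, T ≤ t → V t = 0 := by
  obtain ⟨hp0, hp1⟩ := hp
  have hanti : AntitoneOn V (Set.Ici 0) := by
    apply antitoneOn_of_deriv_nonpos (convex_Ici 0) hV.continuous.continuousOn hV.differentiableOn
    intro x hx
    have hx0 : 0 ≤ x := interior_subset hx
    rcases (hVnonneg x hx0).eq_or_lt with h | h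
    · exact hVzero x hx0 h.symm
    · have h1 := hVdecay x hx0 h
      have h2 : 0 < a * V x ^ p := by positivity
      have h3 : 0 < b * V x ^ q := by positivity
      linarith
  intro t ht
  have hc1 : 0 < a * (1 - p) := mul_pos ha (by linarith)
  have hc2 : 0 < b * (q - 1) := mul_pos hb (by linarith)
  obtain ⟨T1, hT1⟩ : ∃ T1, T1 = 1 / (b * (q - 1)) := ⟨_, rfl⟩
  have hT1p : 0 < T1 := by rw [hT1]; positivity
  have hT2p : 0 < 1 / (a * (1 - p)) := by positivity
  have hT1t : T1 ≤ t := by linarith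
  have ht0 : 0 ≤ t := by linarith
  by_contra hne
  have hpos : 0 < V t := lt_of_le_of_ne (hVnonneg t ht0) (Ne.symm hne)
  have hposI : ∀ s ∈ Set.Icc 0 t, 0 < V s := fun s hs =>
    hpos.trans_le (hanti hs.1 ht0 hs.2)
  have hder : ∀ r : ℝ, ∀ s ∈ Set.Icc 0 t,
      HasDerivAt (fun x => V x ^ r) (deriv V s * r * V s ^ (r - 1)) s := fun r s hs =>
    (hV s).hasDerivAt.rpow_const (Or.inl (hposI s hs).ne')
  have hcont : ∀ r : ℝ, ContinuousOn (fun x => V x ^ r) (Set.Icc 0 t) := fun r s hs =>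
    (hder r s hs).continuousAt.continuousWithinAt
  have hdiff : ∀ r : ℝ, DifferentiableOn ℝ (fun x => V x ^ r) (interior (Set.Icc 0 t)) :=
    fun r s hs => (hder r s (interior_subset hs)).differentiableAt.differentiableWithinAt
  have hT1m : T1 ∈ Set.Icc 0 t := ⟨hT1p.le, hT1t⟩
  have A := (convex_Icc 0 t).mul_sub_le_image_sub_of_le_deriv (hcont (1 - q)) (hdiff (1 - q))
    (C := b * (q - 1)) (by
      intro s hs
      have hs' := interior_subset hs
      have hv := hposI s hs'
      rw [(hder _ s hs').deriv, show 1 - q - 1 = -q by ring]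
      have h1 := hVdecay s hs'.1 hv
      have h2 : 0 < a * V s ^ p := by positivity
      have h3 : V s ^ q * V s ^ (-q) = 1 := by
        rw [← Real.rpow_add hv]; simp
      have h4 : 0 < V s ^ (-q) := by positivity
      have h5 : b * V s ^ q * V s ^ (-q) ≤ -deriv V s * V s ^ (-q) :=
        mul_le_mul_of_nonneg_right (by linarith) h4.le
      have h6 : b ≤ -deriv V s * V s ^ (-q) := by
        rwa [mul_assoc, h3, mul_one] at h5
      have h7 := mul_le_mul_of_nonneg_right h6 (by linarith : 0 ≤ q - 1)
      linarith) 0 ⟨le_rfl, ht0⟩ T1 hT1m hT1p.le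
  have B := (convex_Icc 0 t).image_sub_le_mul_sub_of_deriv_le (hcont (1 - p)) (hdiff (1 - p))
    (C := -(a * (1 - p))) (by
      intro s hs
      have hs' := interior_subset hs
      have hv := hposI s hs'
      rw [(hder _ s hs').deriv, show 1 - p - 1 = -p by ring]
      have h1 := hVdecay s hs'.1 hv
      have h2 : 0 < b * V s ^ q := by positivity
      have h3 : V s ^ p * V s ^ (-p) = 1 := by
        rw [← Real.rpow_add hv]; simp
      have h4 : 0 < V s ^ (-p) := by positivity
      have h5 : a * V s ^ p * V s ^ (-p) ≤ -deriv V s * V s ^ (-p) :=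
        mul_le_mul_of_nonneg_right (by linarith) h4.le
      have h6 : a ≤ -deriv V s * V s ^ (-p) := by
        rwa [mul_assoc, h3, mul_one] at h5
      have h7 := mul_le_mul_of_nonneg_right h6 (by linarith : 0 ≤ 1 - p)
      linarith) T1 hT1m t ⟨ht0, le_rfl⟩ hT1t
  have e1 : b * (q - 1) * (T1 - 0) = 1 := by
    rw [hT1, sub_zero]; exact mul_one_div_cancel hc2.ne'
  have e2 : 1 ≤ a * (1 - p) * (t - T1) := by
    have h1 : 1 / (a * (1 - p)) ≤ t - T1 := by linarith
    have h2 := mul_le_mul_of_nonneg_left h1 hc1.le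
    rwa [mul_one_div_cancel hc1.ne'] at h2
  have hV0 : 0 < V 0 ^ (1 - q) := Real.rpow_pos_of_pos (hposI 0 ⟨le_rfl, ht0⟩) _
  have hVt : 0 < V t ^ (1 - p) := Real.rpow_pos_of_pos hpos _
  have hv1 := hposI T1 hT1m
  have hlt : V T1 < 1 := by
    by_contra hge
    have := Real.rpow_le_one_of_one_le_of_nonpos (not_lt.mp hge) (by linarith : 1 - q ≤ 0)
    linarith
  have := Real.rpow_lt_one hv1.le hlt (by linarith : 0 < 1 - p)
  linarith
end

section
/- Let z : ℝ^N → ℝ^N, x* ∈ ℝ^N, and c ∈ (0,1) satisfy ‖z(x) − x*‖₂ ≤ c‖x − x*‖₂ for all x ∈ ℝ^N. Let ε(c) := log(c)/log((1−c)/(1+c)), let κ₁ > 0, κ₂ > 0, α₁ ∈ (1 − ε(c), 1) ∩ (0,1), and α₂ > 1. Define the vector field h : ℝ^N → ℝ^N by h(x) = −κ₁(x − z(x))/‖x − z(x)‖₂^(1−α₁) − κ₂(x − z(x))/‖x − z(x)‖₂^(1−α₂) for x ≠ x*, and h(x*) = 0. Set s₁ := (κ₁/(1−c)^(1−α₁))·(((1−c)/(1+c))^(1−α₁)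 − c), s₂ := (κ₂/(1−c)^(1−α₂))·(((1−c)/(1+c))^(1−α₂) − c), γ₁ := (1+α₁)/2, γ₂ := (1+α₂)/2, a₁ := 2^(γ₁)·s₁, a₂ := 2^(γ₂)·s₂, and T := 1/(a₁(1−γ₁)) + 1/(a₂(γ₂−1)). Then for any differentiable curve x : ℝ → ℝ^N satisfying x′(t) = h(x(t)) for all t ≥ 0, one has x(t) = x* for all t ≥ T. -/
lemma aux_tan (c s : ℝ) (h0 : 0 < c) (h1 : c < 1) (hs : c < Real.exp s) :
    Real.log ((Real.exp s - c) / (1 - c)) ≤ s / (1 - c) := by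
  have hc : 0 < 1 - c := by linarith
  rw [Real.log_le_iff_le_exp (div_pos (by linarith) hc), div_le_iff₀ hc]
  have := convexOn_exp.2 (Set.mem_univ 0) (Set.mem_univ (s / (1 - c))) h0.le hc.le (by ring)
  simp only [smul_eq_mul, Real.exp_zero, mul_zero, zero_add, mul_one] at this
  rw [mul_div_cancel₀ _ hc.ne'] at this
  linarith

lemma aux_big (c β X : ℝ) (h1 : c < 1) (hX : X = Real.log ((1 + c) / (1 - c)))
    (hb : 1 - c < β) (hr : c < Real.exp (-(β * X))) : c < 2 / 3 := by
  by_contra hcon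
  push Not at hcon
  have hc : 0 < 1 - c := by linarith
  have h5 : Real.log 5 ≤ X := by
    rw [hX]
    apply Real.log_le_log (by norm_num)
    rw [le_div_iff₀ hc]; linarith
  have h5' : (3 : ℝ) / 2 ≤ Real.log 5 := by
    rw [Real.le_log_iff_exp_le (by norm_num)]
    have h : Real.exp (3 / 2) ^ 2 = Real.exp 1 ^ 3 := by
      rw [← Real.exp_nat_mul, ← Real.exp_nat_mul]; norm_num
    have h2 := Real.exp_one_lt_d9
    have h3 : Real.exp 1 ^ 3 ≤ 2.72 ^ 3 := by
      apply pow_le_pow_left₀ (Real.exp_pos _).le; linarith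
    apply le_of_sq_le_sq _ (by norm_num) 
    rw [h]; exact h3.trans (by norm_num)
  have hlog : Real.log c < -(β * X) := by
    rw [Real.log_lt_iff_lt_exp (by linarith)]; exact hr
  have hc' : 1 - c⁻¹ ≤ Real.log c := Real.one_sub_inv_le_log_of_pos (by linarith)
  have h6 : (1 - c) * (3 / 2) ≤ β * X := by
    apply mul_le_mul hb.le (h5'.trans h5) (by norm_num) (by linarith)
  have h7 : c⁻¹ * c = 1 := inv_mul_cancel₀ (by linarith)
  have h8 : c⁻¹ ≤ 3 / 2 := by
    rw [inv_le_comm₀ (by linarith) (by norm_num)]; linarith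
  nlinarith

lemma aux_numA (c θ : ℝ) (h0 : 0 < c) (h1 : c < 2 / 3) (ht : 9 / 20 ≤ θ) :
    -Real.log (Real.sqrt (1 - c ^ 2)) ≤ 2 / 3 * θ := by
  have hp : 5 / 9 ≤ 1 - c ^ 2 := by nlinarith
  rw [Real.log_sqrt (by linarith)]
  have : Real.log (5 / 9) ≤ Real.log (1 - c ^ 2) := Real.log_le_log (by norm_num) hp
  have h2 : -(3 / 5 : ℝ) ≤ Real.log (5 / 9) := by
    rw [Real.le_log_iff_exp_le (by norm_num), Real.exp_neg]
    rw [inv_le_comm₀ (Real.exp_pos _) (by norm_num)]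
    have := Real.sum_le_exp_of_nonneg (x := 3 / 5) (by norm_num) 4
    norm_num [Finset.sum_range_succ, Nat.factorial] at this ⊢
    linarith
  linarith

lemma aux_numB (c θ : ℝ) (h0 : 0 < c) (h1 : c < 2 / 3) (ht0 : 0 < θ) (ht : θ < 9 / 20) :
    (1 - θ) * (Real.log ((1 - c) / (1 - c + 2 * c ^ 2)) - Real.log (Real.sqrt (1 - c ^ 2)))
      - θ * Real.log (1 - c) ≤ 2 / 3 * θ * (1 - θ) := by
  have hc : 0 < 1 - c := by linarith
  have hq : 0 < 1 - c + 2 * c ^ 2 := by positivity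
  rw [Real.log_sqrt (by nlinarith), Real.log_div hc.ne' hq.ne',
    show 1 - c ^ 2 = (1 - c) * (1 + c) by ring, Real.log_mul hc.ne' (by linarith)]
  set P := -Real.log (1 - c) with hP
  set Q := Real.log (1 + c) with hQ
  set W := Real.log (1 - c + 2 * c ^ 2) with hW
  -- θ = 0 endpoint
  have e0 : 0 ≤ P / 2 + Q / 2 + W := by
    have : Real.log (1 - c) ≤ Real.log ((1 + c) * (1 - c + 2 * c ^ 2) ^ 2) := by
      apply Real.log_le_log hc
      nlinarith [mul_pos h0 h0, pow_pos h0 3, pow_pos h0 4, pow_pos h0 5, sq_nonneg (c - 1 / 4), mul_nonneg h0.le (sq_nonneg (c - 1 / 4))]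
    rw [Real.log_mul (by linarith) (by positivity), Real.log_pow] at this
    push_cast at this
    linarith
  have e1 : 9 / 11 * P ≤ 3 / 10 + (P / 2 + Q / 2 + W) := by
    have hQ0 : 0 ≤ Q := Real.log_nonneg (by linarith)
    rcases le_total c (3 / 8) with h | h
    · have hP1 : P ≤ 12 / 25 := by
        have : Real.log (5 / 8) ≤ Real.log (1 - c) := Real.log_le_log (by norm_num) (by linarith)
        have h2 : -(12 / 25 : ℝ) ≤ Real.log (5 / 8) := by
          rw [Real.le_log_iff_exp_le (by norm_num), Real.exp_neg]
          rw [inv_le_comm₀ (Real.exp_pos _) (by norm_num)]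
          have := Real.sum_le_exp_of_nonneg (x := 12 / 25) (by norm_num) 4
          norm_num [Finset.sum_range_succ, Nat.factorial] at this ⊢
          linarith
        linarith
      have hW1 : -(1 / 7 : ℝ) ≤ W := by
        have := Real.one_sub_inv_le_log_of_pos (show (0:ℝ) < 7 / 8 by norm_num)
        have h2 : Real.log (7 / 8) ≤ W := Real.log_le_log (by norm_num) (by nlinarith [sq_nonneg (c - 1 / 4)])
        norm_num at this
        linarith
      linarith
    · have hP1 : P ≤ 11 / 10 := by
        have : Real.log (1 / 3) ≤ Real.log (1 - c) := Real.log_le_log (by norm_num) (by linarith)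
        have h2 : -(11 / 10 : ℝ) ≤ Real.log (1 / 3) := by
          rw [Real.le_log_iff_exp_le (by norm_num), Real.exp_neg]
          rw [inv_le_comm₀ (Real.exp_pos _) (by norm_num)]
          have := Real.sum_le_exp_of_nonneg (x := 11 / 10) (by norm_num) 7
          norm_num [Finset.sum_range_succ, Nat.factorial] at this ⊢
          linarith
        linarith
      have hW1 : -(3 / 29 : ℝ) ≤ W := by
        have := Real.one_sub_inv_le_log_of_pos (show (0:ℝ) < 29 / 32 by norm_num)
        have h2 : Real.log (29 / 32) ≤ W := Real.log_le_log (by norm_num) (by nlinarith)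
        norm_num at this
        linarith
      have hQ1 : 63 / 200 ≤ Q := by
        have h2 : Real.log (11 / 8) ≤ Q := Real.log_le_log (by norm_num) (by linarith)
        have h3 : (63 / 200 : ℝ) ≤ Real.log (11 / 8) := by
          rw [Real.le_log_iff_exp_le (by norm_num)]
          have := Real.exp_bound' (x := 63 / 200) (by norm_num) (by norm_num) (n := 5) (by norm_num)
          norm_num [Finset.sum_range_succ, Nat.factorial] at this ⊢
          linarith
        linarith
      linarith
  have hP0 : 0 ≤ P := by
    have := Real.log_nonpos hc.le (by linarith); linarith
  set K := P / 2 + Q / 2 + W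
  have hl : Real.log (1 - c) = -P := by simp [hP]
  rw [hl]
  have : -P - W - (-P + Q) / 2 = -K := by simp only [K]; ring
  rw [this]
  -- (1-θ)(-K) + θ P ≤ 2/3 θ (1-θ)
  have k1 : 20 / 11 * θ * P ≤ 2 / 3 * θ + K := by nlinarith
  have k2 : θ * P ≤ (1 - θ) * (20 / 11 * θ * P) := by
    have : 0 ≤ θ * P := by positivity
    nlinarith
  nlinarith

lemma aux_core (c β δ X θ μ : ℝ) (h0 : 0 < c) (h1 : c < 1) (hb0 : 0 < β) (hb1 : β < 1)
    (hd : 0 < δ) (hX : X = Real.log ((1 + c) / (1 - c))) (hr : c < Real.exp (-(β * X)))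
    (hθ : θ = β / (β + δ))
    (hμ : (β ≤ 1 - c ∧ μ = 1) ∨ (1 - c < β ∧ μ = Real.sqrt (1 - c ^ 2))) :
    (1 - θ) * (Real.log ((Real.exp (-(β * X)) - c) / (1 - c)) - Real.log μ)
      + θ * Real.log ((Real.exp (δ * X) - c) / (1 - c)) ≤ 2 / 3 * θ * (1 - θ) := by
  have hc : 0 < 1 - c := by linarith
  have hX0 : 0 < X := by
    rw [hX]; apply Real.log_pos; rw [lt_div_iff₀ hc]; linarith
  have hθ0 : 0 < θ := by rw [hθ]; positivity
  have hθ1 : 1 - θ = δ / (β + δ) := by rw [hθ]; field_simp; ring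
  have hθ1' : 0 < 1 - θ := by rw [hθ1]; positivity
  have hbal : (1 - θ) * β = θ * δ := by rw [hθ1, hθ]; field_simp
  have hr2 : c < Real.exp (δ * X) := h1.trans (Real.one_lt_exp_iff.2 (by positivity))
  have t1 := aux_tan c _ h0 h1 hr
  have t2 := aux_tan c _ h0 h1 hr2
  have hJ : (1 - θ) * Real.log ((Real.exp (-(β * X)) - c) / (1 - c))
      + θ * Real.log ((Real.exp (δ * X) - c) / (1 - c)) ≤ 0 := by
    calc _ ≤ (1 - θ) * (-(β * X) / (1 - c)) + θ * (δ * X / (1 - c)) := by gcongr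
      _ = (θ * δ - (1 - θ) * β) * (X / (1 - c)) := by ring
      _ = 0 := by rw [hbal]; ring
  rcases hμ with ⟨_, rfl⟩ | ⟨hb, rfl⟩
  · rw [Real.log_one]
    have : 0 ≤ 2 / 3 * θ * (1 - θ) := by positivity
    linarith
  have hc3 := aux_big c β X h1 hX hb hr
  rcases le_or_gt (9 / 20) θ with ht | ht
  · have := aux_numA c θ h0 hc3 ht
    nlinarith
  · have hB := aux_numB c θ h0 hc3 hθ0 ht
    have hq : 0 < 1 - c + 2 * c ^ 2 := by positivity
    have u2 : Real.log ((Real.exp (δ * X) - c) / (1 - c)) ≤ δ * X - Real.log (1 - c) := by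
      rw [Real.log_div (by linarith) hc.ne']
      have : Real.log (Real.exp (δ * X) - c) ≤ Real.log (Real.exp (δ * X)) :=
        Real.log_le_log (by linarith) (by linarith)
      rw [Real.log_exp] at this
      linarith
    have u1 : Real.log ((Real.exp (-(β * X)) - c) / (1 - c)) + β * X
        ≤ Real.log ((1 - c) / (1 - c + 2 * c ^ 2)) := by
      have e : Real.log ((Real.exp (-(β * X)) - c) / (1 - c)) + β * X
          = Real.log ((Real.exp (-(β * X)) - c) / (1 - c) * Real.exp (β * X)) := by
        rw [Real.log_mul (div_pos (by linarith) hc).ne' (Real.exp_pos _).ne', Real.log_exp]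
      rw [e]
      apply Real.log_le_log
      · exact mul_pos (div_pos (by linarith) hc) (Real.exp_pos _)
      have hinv : Real.exp (-(β * X)) * Real.exp (β * X) = 1 := by
        rw [← Real.exp_add]; simp
      -- bound for r
      have hrle : Real.exp (-(β * X)) * (1 + c) ≤ 1 - c + 2 * c ^ 2 := by
        have s1 : Real.exp (-(β * X)) ≤ Real.exp ((1 - c) * (-X)) := by
          apply Real.exp_le_exp.2; nlinarith
        have s2 := convexOn_exp.2 (Set.mem_univ 0) (Set.mem_univ (-X)) h0.le hc.le (by ring)
        have s3 : Real.exp (-X) = (1 - c) / (1 + c) := by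
          rw [hX, Real.exp_neg, Real.exp_log (by positivity), inv_div]
        simp only [smul_eq_mul, Real.exp_zero, mul_zero, zero_add, mul_one, s3] at s2
        have s4 : (c + (1 - c) * ((1 - c) / (1 + c))) * (1 + c) = 1 - c + 2 * c ^ 2 := by
          field_simp; ring
        rw [← s4]
        gcongr
        linarith
      rw [div_mul_eq_mul_div, div_le_div_iff₀ hc hq, sub_mul, hinv]
      have : 1 + c ≤ Real.exp (β * X) * (1 - c + 2 * c ^ 2) := by
        calc 1 + c = Real.exp (β * X) * (Real.exp (-(β * X)) * (1 + c)) := by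
              rw [← mul_assoc, mul_comm (Real.exp (β * X)), hinv, one_mul]
          _ ≤ _ := by gcongr
      nlinarith
    have v1 := mul_le_mul_of_nonneg_left u1 hθ1'.le
    have v2 := mul_le_mul_of_nonneg_left u2 hθ0.le
    have hbX : (1 - θ) * (β * X) = θ * (δ * X) := by
      rw [← mul_assoc, hbal, mul_assoc]
    linarith [v1, v2, hB, hbX]

lemma aux_int (n y : ℝ) (hn : 1 < n) (hy : 0 < y) :
    ∫ s in (0:ℝ)..y, (1 + |s| ^ n)⁻¹ ≤ n / (n - 1) - 1 / (2 * (n + 1)) - 1 / (2 * (2 * n - 1)) := by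
  have hpos : ∀ s : ℝ, 0 < 1 + |s| ^ n := fun s => by positivity
  have hcont : Continuous (fun s : ℝ => (1 + |s| ^ n)⁻¹) := by
    apply Continuous.inv₀ _ (fun s => (hpos s).ne')
    exact continuous_const.add (continuous_abs.rpow_const (fun _ => Or.inr (by linarith)))
  have hI : ∀ a b : ℝ, IntervalIntegrable (fun s : ℝ => (1 + |s| ^ n)⁻¹) MeasureTheory.volume a b :=
    fun a b => hcont.intervalIntegrable a b
  set Y := max y 1 with hY
  have hY1 : 1 ≤ Y := le_max_right _ _
  have h1 : ∫ s in (0:ℝ)..y, (1 + |s| ^ n)⁻¹ ≤ ∫ s in (0:ℝ)..Y, (1 + |s| ^ n)⁻¹ := by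
    rw [← intervalIntegral.integral_add_adjacent_intervals (hI 0 y) (hI y Y)]
    have : 0 ≤ ∫ s in y..Y, (1 + |s| ^ n)⁻¹ :=
      intervalIntegral.integral_nonneg (le_max_left _ _) (fun s _ => (inv_pos.2 (hpos s)).le)
    linarith
  rw [← intervalIntegral.integral_add_adjacent_intervals (hI 0 1) (hI 1 Y)] at h1
  have hA : ∫ s in (0:ℝ)..1, (1 + |s| ^ n)⁻¹ ≤ 1 - 1 / (2 * (n + 1)) := by
    have hint : IntervalIntegrable (fun s : ℝ => s ^ n) MeasureTheory.volume 0 1 :=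
      intervalIntegral.intervalIntegrable_rpow' (by linarith)
    have e : ∫ s in (0:ℝ)..1, (1 - (1 / 2) * s ^ n) = 1 - 1 / (2 * (n + 1)) := by
      rw [intervalIntegral.integral_sub (by simp) (hint.const_mul _),
        intervalIntegral.integral_const_mul, integral_rpow (Or.inl (by linarith))]
      rw [Real.one_rpow, Real.zero_rpow (by linarith)]
      simp
      field_simp
    rw [← e]
    apply intervalIntegral.integral_mono_on (by norm_num) (hI 0 1)
    · exact (by simp : IntervalIntegrable (fun _ : ℝ => (1:ℝ)) MeasureTheory.volume 0 1).sub (hint.const_mul _)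
    · intro s hs
      rw [abs_of_nonneg hs.1, inv_le_iff_one_le_mul₀ (by have := Real.rpow_nonneg hs.1 n; linarith)]
      have := Real.rpow_nonneg hs.1 n
      have := Real.rpow_le_one hs.1 hs.2 (by linarith : 0 ≤ n)
      nlinarith
  have hB : ∫ s in (1:ℝ)..Y, (1 + |s| ^ n)⁻¹ ≤ 1 / (n - 1) - 1 / (2 * (2 * n - 1)) := by
    have hnot : (0:ℝ) ∉ Set.uIcc 1 Y := by
      rw [Set.uIcc_of_le hY1]; intro h; linarith [h.1]
    have hint : ∀ r : ℝ, IntervalIntegrable (fun s : ℝ => s ^ r) MeasureTheory.volume 1 Y :=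
      fun r => intervalIntegral.intervalIntegrable_rpow (Or.inr hnot)
    have hle : ∫ s in (1:ℝ)..Y, (1 + |s| ^ n)⁻¹ ≤ ∫ s in (1:ℝ)..Y, (s ^ (-n) - (1 / 2) * s ^ (-(2 * n))) := by
      apply intervalIntegral.integral_mono_on hY1 (hI 1 Y)
      · exact (hint _).sub ((hint _).const_mul _)
      · intro s hs
        have hs0 : 0 < s := by linarith [hs.1]
        rw [abs_of_pos hs0, Real.rpow_neg hs0.le, Real.rpow_neg hs0.le, two_mul, Real.rpow_add hs0]
        have h1 : 1 ≤ s ^ n := Real.one_le_rpow hs.1 (by linarith)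
        set v := s ^ n
        rw [inv_le_iff_one_le_mul₀ (by linarith)]
        have hv : v⁻¹ ≤ 1 := inv_le_one_of_one_le₀ h1
        have hv0 : 0 < v⁻¹ := by positivity
        have hvv : v * v⁻¹ = 1 := mul_inv_cancel₀ (by linarith)
        rw [mul_inv]
        have : (v⁻¹ - 1 / 2 * (v⁻¹ * v⁻¹)) * (1 + v) = v⁻¹ + v * v⁻¹ - 1 / 2 * (v⁻¹ * v⁻¹) - 1 / 2 * v⁻¹ * (v * v⁻¹) := by ring
        rw [this, hvv]; nlinarith
    refine hle.trans ?_
    rw [intervalIntegral.integral_sub (hint _) ((hint _).const_mul _),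
        intervalIntegral.integral_const_mul, integral_rpow (Or.inr ⟨by linarith, hnot⟩),
        integral_rpow (Or.inr ⟨by linarith, hnot⟩), Real.one_rpow, Real.one_rpow]
    have hY0 : 0 < Y := by linarith
    have k1 : 0 < Y ^ (-n + 1) := by positivity
    have k2 : Y ^ (-(2 * n) + 1) ≤ Y ^ (-n + 1) := Real.rpow_le_rpow_of_exponent_le hY1 (by linarith)
    set p := Y ^ (-n + 1)
    set q := Y ^ (-(2 * n) + 1)
    have a1 : (p - 1) / (-n + 1) = 1 / (n - 1) - p / (n - 1) := by
      rw [← neg_div_neg_eq, ← sub_div]; congr 1 <;> ring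
    have a2 : (q - 1) / (-(2 * n) + 1) = 1 / (2 * n - 1) - q / (2 * n - 1) := by
      rw [← neg_div_neg_eq, ← sub_div]; congr 1 <;> ring
    rw [a1, a2]
    have a3 : 1 / (2 * (2 * n - 1)) = 1 / 2 * (1 / (2 * n - 1)) := by
      field_simp
    rw [a3]
    have : q / (2 * n - 1) ≤ p / (n - 1) := by
      apply div_le_div₀ k1.le k2 (by linarith) (by linarith)
    have : 0 < p / (n - 1) := div_pos k1 (by linarith)
    linarith
  have : n / (n - 1) = 1 + 1 / (n - 1) := by
    have : n - 1 ≠ 0 := by linarith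
    field_simp; ring
  linarith

lemma aux_ode (n ρ t : ℝ) (y y' : ℝ → ℝ) (hn : 1 < n) (ht : 0 ≤ t)
    (hy : ∀ s ∈ Set.Icc 0 t, 0 < y s) (hd : ∀ s ∈ Set.Icc 0 t, HasDerivAt y (y' s) s)
    (hle : ∀ s ∈ Set.Icc 0 t, y' s ≤ -(ρ * (1 + y s ^ n))) :
    ρ * t < n / (n - 1) - 1 / (2 * (n + 1)) - 1 / (2 * (2 * n - 1)) := by
  have hpos : ∀ s : ℝ, 0 < 1 + |s| ^ n := fun s => by positivity
  have hcont : Continuous (fun s : ℝ => (1 + |s| ^ n)⁻¹) := by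
    apply Continuous.inv₀ _ (fun s => (hpos s).ne')
    exact continuous_const.add (continuous_abs.rpow_const (fun _ => Or.inr (by linarith)))
  set Φ : ℝ → ℝ := fun v => ∫ s in (0:ℝ)..v, (1 + |s| ^ n)⁻¹ with hΦ
  have hΦd : ∀ v, HasDerivAt Φ ((1 + |v| ^ n)⁻¹) v := fun v =>
    intervalIntegral.integral_hasDerivAt_right (hcont.intervalIntegrable _ _)
      (hcont.stronglyMeasurableAtFilter _ _) hcont.continuousAt
  have hG : ∀ s ∈ Set.Icc 0 t, HasDerivAt (fun s => Φ (y s) + ρ * s)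
      ((1 + |y s| ^ n)⁻¹ * y' s + ρ * 1) s := fun s hs =>
    ((hΦd (y s)).comp s (hd s hs)).add ((hasDerivAt_id s).const_mul ρ)
  have hanti : AntitoneOn (fun s => Φ (y s) + ρ * s) (Set.Icc 0 t) := by
    apply antitoneOn_of_hasDerivWithinAt_nonpos (convex_Icc 0 t)
      (f' := fun s => (1 + |y s| ^ n)⁻¹ * y' s + ρ * 1)
    · intro s hs; exact (hG s hs).continuousAt.continuousWithinAt
    · intro s hs; exact (hG s (interior_subset hs)).hasDerivWithinAt
    · intro s hs
      have hs' := interior_subset hs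
      have h1 := hle s hs'
      have h2 := hpos (y s)
      rw [← abs_of_pos (hy s hs')] at h1
      have h3 : (1 + |y s| ^ n)⁻¹ * y' s ≤ (1 + |y s| ^ n)⁻¹ * (-(ρ * (1 + |y s| ^ n))) := by
        apply mul_le_mul_of_nonneg_left _ (inv_pos.2 h2).le
        simpa [abs_of_pos (hy s hs')] using h1
      have h4 : (1 + |y s| ^ n)⁻¹ * (-(ρ * (1 + |y s| ^ n))) = -ρ := by
        field_simp
      linarith
  have hm := hanti (Set.left_mem_Icc.2 ht) (Set.right_mem_Icc.2 ht) ht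
  simp only [mul_zero, add_zero] at hm
  have h0 : 0 < Φ (y t) :=
    intervalIntegral.intervalIntegral_pos_of_pos (hcont.intervalIntegrable _ _)
      (fun s => inv_pos.2 (hpos s)) (hy t (Set.right_mem_Icc.2 ht))
  have := aux_int n (y 0) hn (hy 0 (Set.left_mem_Icc.2 ht))
  simp only [hΦ] at *
  linarith

lemma aux_vec {E : Type*} [NormedAddCommGroup E] [InnerProductSpace ℝ E] (u d : E) (c : ℝ)
    (h0 : 0 < c) (h1 : c < 1) (hu : u ≠ 0) (h : ‖u - d‖ ≤ c * ‖u‖) :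
    (1 - c) * ‖u‖ ≤ ‖d‖ ∧ (1 - c) * ‖u‖ ^ 2 ≤ inner ℝ u d ∧
    (‖u‖ ^ 2 * (1 - c ^ 2) + ‖d‖ ^ 2) / 2 ≤ inner ℝ u d := by
  have hn : 0 < ‖u‖ := norm_pos_iff.2 hu
  have a : ‖u‖ - ‖d‖ ≤ ‖u - d‖ := norm_sub_norm_le u d
  have b := norm_sub_sq_real u d
  have e : ‖u - d‖ ^ 2 ≤ (c * ‖u‖) ^ 2 := pow_le_pow_left₀ (norm_nonneg _) h 2
  have f : inner ℝ u (u - d) ≤ ‖u‖ * ‖u - d‖ := real_inner_le_norm _ _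
  rw [inner_sub_right, real_inner_self_eq_norm_sq] at f
  refine ⟨by nlinarith, by nlinarith, by nlinarith⟩

lemma aux_t1 (U D I c β μ : ℝ) (h0 : 0 < c) (h1 : c < 1) (hb0 : 0 < β) (hb1 : β < 1) (hU : 0 < U)
    (hD : (1 - c) * U ≤ D) (hI : (U ^ 2 * (1 - c ^ 2) + D ^ 2) / 2 ≤ I)
    (hμ : (β ≤ 1 - c ∧ μ = 1) ∨ (1 - c < β ∧ μ = Real.sqrt (1 - c ^ 2))) :
    μ * (1 - c) ^ (1 - β) * U ^ (2 - β) * D ^ β ≤ I := by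
  have hc : 0 < 1 - c := by linarith
  have hD0 : 0 < D := lt_of_lt_of_le (by positivity) hD
  refine le_trans ?_ hI
  rcases hμ with ⟨hb, rfl⟩ | ⟨hb, rfl⟩
  · set τ := D / ((1 - c) * U) with hτ
    have hτ1 : 1 ≤ τ := by rw [hτ, le_div_iff₀ (by positivity)]; linarith
    have hDe : D = (1 - c) * U * τ := by rw [hτ]; field_simp
    have k : τ ^ β ≤ (1 + c) / 2 + (1 - c) / 2 * τ ^ 2 := by
      have k1 : τ ^ β ≤ τ ^ (1 - c) := Real.rpow_le_rpow_of_exponent_le hτ1 hb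
      have k2 := Real.geom_mean_le_arith_mean2_weighted (w₁ := (1 + c) / 2) (w₂ := (1 - c) / 2)
        (p₁ := 1) (p₂ := τ ^ 2) (by linarith) (by linarith) (by norm_num) (by positivity) (by ring)
      rw [Real.one_rpow, one_mul, ← Real.rpow_natCast τ 2, ← Real.rpow_mul (by linarith)] at k2
      have : ((2:ℕ):ℝ) * ((1 - c) / 2) = 1 - c := by push_cast; ring
      rw [this, Real.rpow_natCast] at k2
      linarith
    have e : 1 * (1 - c) ^ (1 - β) * U ^ (2 - β) * D ^ β = (1 - c) * U ^ 2 * τ ^ β := by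
      rw [hDe, Real.mul_rpow (by positivity) (by linarith), Real.mul_rpow hc.le hU.le]
      have e1 : (1 - c) ^ (1 - β) * (1 - c) ^ β = 1 - c := by
        rw [← Real.rpow_add hc]; simp
      have e2 : U ^ (2 - β) * U ^ β = U ^ 2 := by
        rw [← Real.rpow_add hU]; simp
      calc _ = ((1 - c) ^ (1 - β) * (1 - c) ^ β) * (U ^ (2 - β) * U ^ β) * τ ^ β := by ring
        _ = _ := by rw [e1, e2]
    rw [e]
    calc (1 - c) * U ^ 2 * τ ^ β ≤ (1 - c) * U ^ 2 * ((1 + c) / 2 + (1 - c) / 2 * τ ^ 2) := by gcongr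
      _ = _ := by rw [hDe]; ring
  · have hsq : 0 ≤ 1 - c ^ 2 := by nlinarith
    set m := Real.sqrt (1 - c ^ 2)
    have hm : m ^ 2 = 1 - c ^ 2 := Real.sq_sqrt hsq
    have hm0 : 0 ≤ m := Real.sqrt_nonneg _
    have e1 : ((1 - c) * U) ^ (1 - β) ≤ D ^ (1 - β) :=
      Real.rpow_le_rpow (by positivity) hD (by linarith)
    rw [Real.mul_rpow hc.le hU.le] at e1
    have e2 : U ^ (2 - β) = U * U ^ (1 - β) := by
      rw [show 2 - β = 1 + (1 - β) by ring, Real.rpow_add hU, Real.rpow_one]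
    have e3 : D ^ (1 - β) * D ^ β = D := by rw [← Real.rpow_add hD0]; simp
    calc m * (1 - c) ^ (1 - β) * U ^ (2 - β) * D ^ β
        = m * U * D ^ β * ((1 - c) ^ (1 - β) * U ^ (1 - β)) := by rw [e2]; ring
      _ ≤ m * U * D ^ β * D ^ (1 - β) := by gcongr
      _ = m * U * (D ^ (1 - β) * D ^ β) := by ring
      _ = m * U * D := by rw [e3]
      _ ≤ _ := by rw [← hm]; nlinarith [sq_nonneg (U * m - D)]

lemma aux_G (θ : ℝ) (hθ0 : 0 < θ) (hθ1' : 0 < 1 - θ) :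
    (1 - θ) * (θ⁻¹ / (θ⁻¹ - 1) - 1 / (2 * (θ⁻¹ + 1)) - 1 / (2 * (2 * θ⁻¹ - 1)))
      ≤ 1 - 2 / 3 * θ * (1 - θ) := by
  have e1 : θ⁻¹ / (θ⁻¹ - 1) = 1 / (1 - θ) := by
    have : θ⁻¹ - 1 = (1 - θ) / θ := by field_simp
    rw [this]; field_simp
  have e2 : 1 / (2 * (θ⁻¹ + 1)) = θ / (2 * (1 + θ)) := by
    have : θ⁻¹ + 1 = (1 + θ) / θ := by field_simp
    rw [this]; field_simp
  have e3 : 1 / (2 * (2 * θ⁻¹ - 1)) = θ / (2 * (2 - θ)) := by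
    have : 2 * θ⁻¹ - 1 = (2 - θ) / θ := by field_simp
    have h2 : 2 - θ ≠ 0 := by linarith
    rw [this]; field_simp
  have h2 : 0 < 2 - θ := by linarith
  have e4 : (2 : ℝ) / 3 * θ ≤ θ / (2 * (1 + θ)) + θ / (2 * (2 - θ)) := by
    have : θ / (2 * (1 + θ)) + θ / (2 * (2 - θ)) = θ * (3 / (2 * ((1 + θ) * (2 - θ)))) := by
      field_simp; ring
    rw [this, mul_comm]
    apply mul_le_mul_of_nonneg_left _ hθ0.le
    rw [le_div_iff₀ (by positivity)]
    have := sq_nonneg (2 * θ - 1)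
    linarith [show (2:ℝ) / 3 * (2 * ((1 + θ) * (2 - θ))) = 3 - 1 / 3 * (2 * θ - 1) ^ 2 by ring]
  rw [e1, e2, e3]
  have e5 : (1 - θ) * (1 / (1 - θ)) = 1 := by field_simp
  have := mul_le_mul_of_nonneg_left e4 hθ1'.le
  linarith

set_option maxHeartbeats 1000000 in
lemma aux_fin (c β δ X θ μ κ₁ κ₂ l₁ l₂ s₁ s₂ T t : ℝ) (h0 : 0 < c) (h1 : c < 1) (hb0 : 0 < β)
    (hb1 : β < 1)
    (hd : 0 < δ) (hX : X = Real.log ((1 + c) / (1 - c))) (hr : c < Real.exp (-(β * X)))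
    (hθ : θ = β / (β + δ)) (hκ₁ : 0 < κ₁) (hκ₂ : 0 < κ₂)
    (hμ : (β ≤ 1 - c ∧ μ = 1) ∨ (1 - c < β ∧ μ = Real.sqrt (1 - c ^ 2)))
    (hl₁ : l₁ = κ₁ * (μ * (1 - c) ^ (1 - β))) (hl₂ : l₂ = κ₂ * (1 - c) ^ (1 + δ))
    (hs₁ : s₁ = κ₁ / (1 - c) ^ β * (Real.exp (-(β * X)) - c))
    (hs₂ : s₂ = κ₂ / (1 - c) ^ (-δ) * (Real.exp (δ * X) - c))
    (hT : T = 2 ^ (β / 2) / (s₁ * β) + 2 ^ (-(δ / 2)) / (s₂ * δ))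
    (ht : β * l₁ / (l₁ / l₂) ^ θ * t
      < θ⁻¹ / (θ⁻¹ - 1) - 1 / (2 * (θ⁻¹ + 1)) - 1 / (2 * (2 * θ⁻¹ - 1))) : t < T := by
  have hcore := aux_core c β δ X θ μ h0 h1 hb0 hb1 hd hX hr hθ hμ
  have hc : 0 < 1 - c := by linarith
  have hX0 : 0 < X := by
    rw [hX]; apply Real.log_pos; rw [lt_div_iff₀ hc]; linarith
  have hθ0 : 0 < θ := by rw [hθ]; positivity
  have hθ1 : 1 - θ = δ / (β + δ) := by rw [hθ]; field_simp; ring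
  have hθ1' : 0 < 1 - θ := by rw [hθ1]; positivity
  have hbal : (1 - θ) * β = θ * δ := by rw [hθ1, hθ]; field_simp
  have hr2 : c < Real.exp (δ * X) := h1.trans (Real.one_lt_exp_iff.2 (by positivity))
  have hμ0 : 0 < μ := by
    rcases hμ with ⟨_, rfl⟩ | ⟨_, rfl⟩
    · norm_num
    · apply Real.sqrt_pos.2; nlinarith
  have hl₁0 : 0 < l₁ := by rw [hl₁]; positivity
  have hl₂0 : 0 < l₂ := by rw [hl₂]; positivity
  have hr' : 0 < Real.exp (-(β * X)) - c := by linarith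
  have hr2' : 0 < Real.exp (δ * X) - c := by linarith
  have hs₁0 : 0 < s₁ := by rw [hs₁]; positivity
  have hs₂0 : 0 < s₂ := by rw [hs₂]; positivity
  set P₁ : ℝ := 2 ^ (β / 2) / s₁ with hP₁
  set P₂ : ℝ := 2 ^ (-(δ / 2)) / s₂ with hP₂
  have hP₁0 : 0 < P₁ := by positivity
  have hP₂0 : 0 < P₂ := by positivity
  set ω := (l₁ / l₂) ^ θ with hω
  have hω0 : 0 < ω := by positivity
  have hρ : 0 < β * l₁ / ω := by positivity
  -- logs
  have L1 : Real.log l₁ + Real.log P₁ = β / 2 * Real.log 2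
      - (Real.log ((Real.exp (-(β * X)) - c) / (1 - c)) - Real.log μ) := by
    rw [hP₁, hl₁, hs₁, Real.log_div (by positivity) (by positivity), Real.log_mul (by positivity) (by positivity),
      Real.log_mul (by positivity) (by positivity), Real.log_mul (by positivity) (by positivity),
      Real.log_div (by positivity) (by positivity), Real.log_div (by positivity) (by positivity),
      Real.log_rpow hc, Real.log_rpow hc, Real.log_rpow (by norm_num)]
    ring
  have L2 : Real.log l₂ + Real.log P₂ = -(δ / 2) * Real.log 2
      - Real.log ((Real.exp (δ * X) - c) / (1 - c)) := by
    rw [hP₂, hl₂, hs₂, Real.log_div (by positivity) (by positivity), Real.log_mul (by positivity) (by positivity),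
      Real.log_mul (by positivity) (by positivity),
      Real.log_div (by positivity) (by positivity), Real.log_div (by positivity) (by positivity),
      Real.log_rpow hc, Real.log_rpow hc, Real.log_rpow (by norm_num)]
    ring
  have hsum : -(2 / 3 * θ * (1 - θ)) ≤
      (1 - θ) * (Real.log l₁ + Real.log P₁) + θ * (Real.log l₂ + Real.log P₂) := by
    rw [L1, L2]
    have : (1 - θ) * (β / 2 * Real.log 2) = θ * (δ / 2 * Real.log 2) := by
      linear_combination (Real.log 2 / 2) * hbal
    linarith
  have hlog : Real.log (l₁ / ω * (P₁ ^ (1 - θ) * P₂ ^ θ)) =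
      (1 - θ) * (Real.log l₁ + Real.log P₁) + θ * (Real.log l₂ + Real.log P₂) := by
    rw [Real.log_mul (by positivity) (by positivity), Real.log_mul (by positivity) (by positivity),
      Real.log_div (by positivity) (by positivity), Real.log_rpow hP₁0, Real.log_rpow hP₂0, hω,
      Real.log_rpow (by positivity), Real.log_div (by positivity) (by positivity)]
    ring
  have hge : 1 - 2 / 3 * θ * (1 - θ) ≤ l₁ / ω * (P₁ ^ (1 - θ) * P₂ ^ θ) := by
    rw [← hlog] at hsum
    rw [Real.le_log_iff_exp_le (by positivity)] at hsum
    have := Real.add_one_le_exp (-(2 / 3 * θ * (1 - θ)))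
    linarith
  have ham := Real.geom_mean_le_arith_mean2_weighted hθ1'.le hθ0.le hP₁0.le hP₂0.le (by ring)
  have hTeq : (1 - θ) * (β * l₁ / ω * T) = l₁ / ω * ((1 - θ) * P₁ + θ * P₂) := by
    have e1 : T = P₁ / β + P₂ / δ := by
      rw [hT, hP₁, hP₂]; field_simp
    have e2 : θ = (1 - θ) * β / δ := by rw [hbal]; field_simp
    have e3 : (1 - θ) * P₁ + θ * P₂ = (1 - θ) * β * T := by
      rw [e1, mul_add, hbal]
      have : θ * δ * (P₁ / β) = (1 - θ) * P₁ := by rw [← hbal]; field_simp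
      rw [this]; field_simp
    rw [e3]; ring
  have hG := aux_G θ hθ0 hθ1'
  have hfin : (1 - θ) * (β * l₁ / ω * t) < (1 - θ) * (β * l₁ / ω * T) := by
    calc _ < _ := mul_lt_mul_of_pos_left ht hθ1'
      _ ≤ _ := hG
      _ ≤ _ := hge
      _ ≤ l₁ / ω * ((1 - θ) * P₁ + θ * P₂) := by gcongr
      _ = _ := hTeq.symm
  exact lt_of_mul_lt_mul_left (lt_of_mul_lt_mul_left hfin hθ1'.le) hρ.le

/-- Fixed-time convergence of CAPPA: if the proximal step `z` is a contraction
around `x*` with factor `c ∈ (0,1)`, then every solution of the modified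
proximal dynamical system `ẋ = h(x)` reaches `x*` at or before the uniform
settling time `T`, independently of the initial condition. -/
theorem stmt_15 (N : ℕ) (z : EuclideanSpace ℝ (Fin N) → EuclideanSpace ℝ (Fin N))
    (xs : EuclideanSpace ℝ (Fin N)) (c : ℝ) (hc : c ∈ Set.Ioo (0 : ℝ) 1)
    (hcontr : ∀ x, ‖z x - xs‖ ≤ c * ‖x - xs‖)
    (κ₁ κ₂ α₁ α₂ : ℝ) (hκ₁ : 0 < κ₁) (hκ₂ : 0 < κ₂)
    (hα₁ : α₁ ∈ Set.Ioo (1 - Real.log c / Real.log ((1 - c) / (1 + c))) 1 ∩ Set.Ioo (0 : ℝ) 1)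
    (hα₂ : 1 < α₂)
    (h : EuclideanSpace ℝ (Fin N) → EuclideanSpace ℝ (Fin N))
    (hh : ∀ x, x ≠ xs →
      h x = -((κ₁ / ‖x - z x‖ ^ (1 - α₁)) • (x - z x))
        - (κ₂ / ‖x - z x‖ ^ (1 - α₂)) • (x - z x))
    (hhxs : h xs = 0)
    (s₁ s₂ γ₁ γ₂ a₁ a₂ T : ℝ)
    (hs₁ : s₁ = κ₁ / (1 - c) ^ (1 - α₁) * (((1 - c) / (1 + c)) ^ (1 - α₁) - c))
    (hs₂ : s₂ = κ₂ / (1 - c) ^ (1 - α₂) * (((1 - c) / (1 + c)) ^ (1 - α₂) - c))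
    (hγ₁ : γ₁ = (1 + α₁) / 2) (hγ₂ : γ₂ = (1 + α₂) / 2)
    (ha₁ : a₁ = 2 ^ γ₁ * s₁) (ha₂ : a₂ = 2 ^ γ₂ * s₂)
    (hT : T = 1 / (a₁ * (1 - γ₁)) + 1 / (a₂ * (γ₂ - 1)))
    (x : ℝ → EuclideanSpace ℝ (Fin N))
    (hx : ∀ t : ℝ, 0 ≤ t → HasDerivAt x (h (x t)) t) :
    ∀ t : ℝ, T ≤ t → x t = xs := by
  obtain ⟨h0, h1⟩ := hc
  obtain ⟨⟨hα, -⟩, hα0, hα1⟩ := hα₁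
  have hc : 0 < 1 - c := by linarith
  obtain ⟨β, hβ⟩ : ∃ β, β = 1 - α₁ := ⟨_, rfl⟩
  obtain ⟨δ, hδ⟩ : ∃ δ, δ = α₂ - 1 := ⟨_, rfl⟩
  have hb0 : 0 < β := by linarith
  have hb1 : β < 1 := by linarith
  have hd : 0 < δ := by linarith
  obtain ⟨X, hX⟩ : ∃ X, X = Real.log ((1 + c) / (1 - c)) := ⟨_, rfl⟩
  have hX0 : 0 < X := by
    rw [hX]; apply Real.log_pos; rw [lt_div_iff₀ hc]; linarith
  have hXl : Real.log ((1 - c) / (1 + c)) = -X := by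
    rw [hX, ← Real.log_inv, inv_div]
  have hxpos : 0 < (1 - c) / (1 + c) := by positivity
  have hexp : ∀ r : ℝ, ((1 - c) / (1 + c)) ^ r = Real.exp (-(r * X)) := by
    intro r
    rw [Real.rpow_def_of_pos hxpos, hXl]; congr 1; ring
  have hr : c < Real.exp (-(β * X)) := by
    rw [← Real.log_lt_iff_lt_exp h0]
    rw [hXl] at hα
    have : β < Real.log c / (-X) := by linarith
    rw [lt_div_iff_of_neg (by linarith)] at this
    linarith
  obtain ⟨θ, hθ⟩ : ∃ θ, θ = β / (β + δ) := ⟨_, rfl⟩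
  have hθ0 : 0 < θ := by rw [hθ]; positivity
  have hθ1 : θ < 1 := by rw [hθ, div_lt_one (by positivity)]; linarith
  obtain ⟨μ, hμ⟩ : ∃ μ : ℝ, (β ≤ 1 - c ∧ μ = 1) ∨ (1 - c < β ∧ μ = Real.sqrt (1 - c ^ 2)) := by
    rcases le_or_gt β (1 - c) with hb | hb
    · exact ⟨1, Or.inl ⟨hb, rfl⟩⟩
    · exact ⟨_, Or.inr ⟨hb, rfl⟩⟩
  have hμ0 : 0 < μ := by
    rcases hμ with ⟨_, rfl⟩ | ⟨_, rfl⟩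
    · norm_num
    · apply Real.sqrt_pos.2; nlinarith
  obtain ⟨l₁, hl₁⟩ : ∃ l₁, l₁ = κ₁ * (μ * (1 - c) ^ (1 - β)) := ⟨_, rfl⟩
  obtain ⟨l₂, hl₂⟩ : ∃ l₂, l₂ = κ₂ * (1 - c) ^ (1 + δ) := ⟨_, rfl⟩
  have hl₁0 : 0 < l₁ := by rw [hl₁]; positivity
  have hl₂0 : 0 < l₂ := by rw [hl₂]; positivity
  -- rewrite the constants
  have hs₁' : s₁ = κ₁ / (1 - c) ^ β * (Real.exp (-(β * X)) - c) := by
    rw [hs₁, hexp, ← hβ]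
  have hs₂' : s₂ = κ₂ / (1 - c) ^ (-δ) * (Real.exp (δ * X) - c) := by
    rw [hs₂, hexp, show 1 - α₂ = -δ by rw [hδ]; ring]; congr 3; ring
  have hr2 : c < Real.exp (δ * X) := h1.trans (Real.one_lt_exp_iff.2 (by positivity))
  have hs₁0 : 0 < s₁ := by
    rw [hs₁']; have : 0 < Real.exp (-(β * X)) - c := by linarith
    positivity
  have hs₂0 : 0 < s₂ := by
    rw [hs₂']; have : 0 < Real.exp (δ * X) - c := by linarith
    positivity
  have hT' : T = 2 ^ (β / 2) / (s₁ * β) + 2 ^ (-(δ / 2)) / (s₂ * δ) := by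
    have e1 : (2:ℝ) ^ γ₁ = 2 / 2 ^ (β / 2) := by
      rw [hγ₁, show (1 + α₁) / 2 = 1 - β / 2 by rw [hβ]; ring, Real.rpow_sub (by norm_num), Real.rpow_one]
    have e2 : (2:ℝ) ^ γ₂ = 2 / 2 ^ (-(δ / 2)) := by
      rw [hγ₂, show (1 + α₂) / 2 = 1 - -(δ / 2) by rw [hδ]; ring, Real.rpow_sub (by norm_num), Real.rpow_one]
    rw [hT, ha₁, ha₂, e1, e2, show 1 - γ₁ = β / 2 by rw [hγ₁, hβ]; ring,
      show γ₂ - 1 = δ / 2 by rw [hγ₂, hδ]; ring]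
    have p1 : (0:ℝ) < 2 ^ (β / 2) := by positivity
    have p2 : (0:ℝ) < 2 ^ (-(δ / 2)) := by positivity
    generalize (2:ℝ) ^ (β / 2) = A at *
    generalize (2:ℝ) ^ (-(δ / 2)) = B at *
    field_simp
  have hT0 : 0 < T := by rw [hT']; positivity
  -- the dissipation inequality
  have hdiss : ∀ v, v ≠ xs → inner ℝ (v - xs) (h v)
      ≤ -(l₁ * ‖v - xs‖ ^ (2 - β) + l₂ * ‖v - xs‖ ^ (2 + δ)) := by
    intro v hv
    have hu : v - xs ≠ 0 := sub_ne_zero.2 hv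
    have hU : 0 < ‖v - xs‖ := norm_pos_iff.2 hu
    obtain ⟨hD, hI1, hI2⟩ := aux_vec (v - xs) (v - z v) c h0 h1 hu (by
      have : v - xs - (v - z v) = z v - xs := by abel
      rw [this]; exact hcontr v)
    have hD0 : 0 < ‖v - z v‖ := lt_of_lt_of_le (by positivity) hD
    have ht1 := aux_t1 _ _ _ c β μ h0 h1 hb0 hb1 hU hD hI2 hμ
    rw [hh v hv, ← hβ, show 1 - α₂ = -δ by rw [hδ]; ring, inner_sub_right, inner_neg_right,
      inner_smul_right, inner_smul_right]
    generalize (inner ℝ (v - xs) (v - z v) : ℝ) = I at *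
    generalize ‖v - z v‖ = D at *
    generalize ‖v - xs‖ = U at *
    have q1 : l₁ * U ^ (2 - β) ≤ κ₁ / D ^ β * I := by
      rw [div_mul_eq_mul_div, le_div_iff₀ (by positivity), hl₁]
      calc _ = κ₁ * (μ * (1 - c) ^ (1 - β) * U ^ (2 - β) * D ^ β) := by ring
        _ ≤ _ := by gcongr
    have q2 : l₂ * U ^ (2 + δ) ≤ κ₂ / D ^ (-δ) * I := by
      rw [Real.rpow_neg hD0.le, div_inv_eq_mul, hl₂]
      have w1 : ((1 - c) * U) ^ δ ≤ D ^ δ := Real.rpow_le_rpow (by positivity) hD hd.le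
      rw [Real.mul_rpow hc.le hU.le] at w1
      have w2 : (1 - c) ^ (1 + δ) = (1 - c) * (1 - c) ^ δ := by
        rw [Real.rpow_add hc, Real.rpow_one]
      have w3 : U ^ (2 + δ) = U ^ 2 * U ^ δ := by
        rw [Real.rpow_add hU]; norm_num
      calc _ = κ₂ * (((1 - c) ^ δ * U ^ δ) * ((1 - c) * U ^ 2)) := by rw [w2, w3]; ring
        _ ≤ κ₂ * (D ^ δ * I) := by gcongr
        _ = _ := by ring
    linarith
  intro t hTt
  have ht0 : 0 ≤ t := hT0.le.trans hTt
  by_contra hne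
  have hVd : ∀ s, 0 ≤ s → HasDerivAt (fun s => ‖x s - xs‖ ^ 2)
      (2 * inner ℝ (x s - xs) (h (x s))) s := fun s hs =>
    ((hx s hs).sub_const xs).norm_sq
  have hanti : AntitoneOn (fun s => ‖x s - xs‖ ^ 2) (Set.Icc 0 t) := by
    apply antitoneOn_of_hasDerivWithinAt_nonpos (convex_Icc 0 t)
      (f' := fun s => 2 * inner ℝ (x s - xs) (h (x s)))
    · intro s hs; exact (hVd s hs.1).continuousAt.continuousWithinAt
    · intro s hs; exact (hVd s (interior_subset hs).1).hasDerivWithinAt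
    · intro s hs
      by_cases hxs : x s = xs
      · simp [hxs]
      · have := hdiss (x s) hxs
        have : 0 ≤ l₁ * ‖x s - xs‖ ^ (2 - β) + l₂ * ‖x s - xs‖ ^ (2 + δ) := by positivity
        linarith
  have hpos : ∀ s ∈ Set.Icc 0 t, x s ≠ xs := by
    intro s hs hxs
    have := hanti hs (Set.right_mem_Icc.2 ht0) hs.2
    simp only [hxs, sub_self, norm_zero] at this
    have h2 : 0 < ‖x t - xs‖ := norm_pos_iff.2 (sub_ne_zero.2 hne)
    nlinarith
  have hω0 : 0 < (l₁ / l₂) ^ θ := by positivity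
  have hode := aux_ode θ⁻¹ (β * l₁ / (l₁ / l₂) ^ θ) t
    (fun s => (‖x s - xs‖ ^ 2) ^ (β / 2) / (l₁ / l₂) ^ θ)
    (fun s => 2 * inner ℝ (x s - xs) (h (x s)) * (β / 2) * (‖x s - xs‖ ^ 2) ^ (β / 2 - 1)
      / (l₁ / l₂) ^ θ)
    ((one_lt_inv₀ hθ0).2 hθ1) ht0
    (by
      intro s hs
      have : 0 < ‖x s - xs‖ := norm_pos_iff.2 (sub_ne_zero.2 (hpos s hs))
      positivity)
    (by
      intro s hs
      have : 0 < ‖x s - xs‖ := norm_pos_iff.2 (sub_ne_zero.2 (hpos s hs))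
      exact ((hVd s hs.1).rpow_const (Or.inl (by positivity))).div_const _)
    (by
      intro s hs
      have hU : 0 < ‖x s - xs‖ := norm_pos_iff.2 (sub_ne_zero.2 (hpos s hs))
      have hdi := hdiss (x s) (hpos s hs)
      beta_reduce
      generalize (inner ℝ (x s - xs) (h (x s)) : ℝ) = I at *
      generalize ‖x s - xs‖ = U at *
      have e0 : ∀ r : ℝ, (U ^ 2) ^ r = U ^ (2 * r) := by
        intro r
        rw [← Real.rpow_natCast U 2, ← Real.rpow_mul hU.le]; norm_num
      rw [Real.div_rpow (by positivity) hω0.le, ← Real.rpow_mul (by positivity : 0 ≤ l₁ / l₂),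
        mul_inv_cancel₀ hθ0.ne', Real.rpow_one, e0, e0, ← Real.rpow_mul hU.le]
      have e1 : 2 * (β / 2) * θ⁻¹ = β + δ := by rw [hθ]; field_simp
      have e2 : 2 * (β / 2 - 1) = β - 2 := by ring
      rw [e1, e2]
      have e3 : U ^ (2 - β) * U ^ (β - 2) = 1 := by rw [← Real.rpow_add hU]; simp
      have e4 : U ^ (2 + δ) * U ^ (β - 2) = U ^ (β + δ) := by
        rw [← Real.rpow_add hU]; congr 1; ring
      have e5 : I * U ^ (β - 2) ≤ -(l₁ + l₂ * U ^ (β + δ)) := by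
        calc I * U ^ (β - 2) ≤ -(l₁ * U ^ (2 - β) + l₂ * U ^ (2 + δ)) * U ^ (β - 2) := by gcongr
          _ = -(l₁ * (U ^ (2 - β) * U ^ (β - 2)) + l₂ * (U ^ (2 + δ) * U ^ (β - 2))) := by ring
          _ = _ := by rw [e3, e4, mul_one]
      calc _ = β / (l₁ / l₂) ^ θ * (I * U ^ (β - 2)) := by ring
        _ ≤ β / (l₁ / l₂) ^ θ * (-(l₁ + l₂ * U ^ (β + δ))) := by gcongr
        _ = _ := by
          have : l₁ * (1 + U ^ (β + δ) / (l₁ / l₂)) = l₁ + l₂ * U ^ (β + δ) := by field_simp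
          rw [← this]; ring)
  have := aux_fin c β δ X θ μ κ₁ κ₂ l₁ l₂ s₁ s₂ T t h0 h1 hb0 hb1 hd hX hr hθ hκ₁ hκ₂ hμ hl₁ hl₂
    hs₁' hs₂' hT' hode
  linarith
end
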